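/- arXiv:1303.0084 — 2 statements merged into one kernel-verified Lean document; each statement's English description precedes it below -/
import Mathlib

section
/- Let F be a field, d, m, n, s ≥ 1, and let S ⊆ F be a subset with 0 ∈ S and |S| = d + 1. Let f = Σ_{ℓ=1}^{s} ∏_{j=1}^{n'} L_{ℓ,j}^{e_{ℓ,j}} ∈ F[x_1,…,x_n] be a depth-3 diagonal circuit, where each L_{ℓ,j} ∈ F[x_1,…,x_n] has total degree at most 1 and each e_ℓ ∈ ℕ^{n'}, and suppose f has total degree at most d and Σ_{ℓ=1}^{s} ∏_{j=1}^{n'} (e_{ℓ,j} + 1) ≤ 2^m. If f ≠ 0, then there exists α ∈ S^n with |{i : α_i ≠ 0}| ≤ m such that f(α) ≠ 0. -/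
/-!
Let `V` be the span of the products `∏ j, L ℓ j ^ k j` with `k j ≤ e ℓ j`. An affine form satisfies
`L (x + y) = L x + P y`, so expanding `f (x + y)` by the binomial theorem shows that all Hasse
derivatives of `f` lie in `V`, whose rank is at most the size of the circuit.

Let `a` be the exponent of the leading monomial of `f`. For `T ⊆ supp a`, differentiating away the
part of `a` outside `T` leaves a polynomial with leading exponent `a` restricted to `T`. These are
`2 ^ #(supp a)` polynomials with distinct leading exponents, hence linearly independent in `V`, and
`supp a` is small. Finally, setting the variables outside `supp a` to zero keeps the monomial `a`,
so the restricted polynomial is nonzero and the combinatorial Nullstellensatz gives the point.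
-/

open MvPolynomial

section HasseDeriv

variable {σ R : Type*} [CommSemiring R]

/-- The Taylor shift `f(x) ↦ f(x + y)`: the outer variables are `y` and the coefficients are
polynomials in `x`. -/
noncomputable def taylorShift : MvPolynomial σ R →ₐ[R] MvPolynomial σ (MvPolynomial σ R) :=
  aeval fun i => C (X i) + X i

/-- The Hasse derivative of multi-order `b` of a multivariate polynomial: the coefficient of `y ^ b`
in `f(x + y)`. -/
noncomputable def mvHasseDeriv (b : σ →₀ ℕ) : MvPolynomial σ R →ₗ[R] MvPolynomial σ R :=
  (lcoeff (MvPolynomial σ R) b).restrictScalars R ∘ₗ taylorShift.toLinearMap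

lemma mvHasseDeriv_apply (b : σ →₀ ℕ) (f : MvPolynomial σ R) :
    mvHasseDeriv b f = coeff b (taylorShift f) :=
  rfl

variable [Fintype σ]

lemma coeff_prod_aeval_X (p : σ → Polynomial R) (b : σ →₀ ℕ) :
    coeff b (∏ i, Polynomial.aeval (X i : MvPolynomial σ R) (p i)) =
      ∏ i, (p i).coeff (b i) := by
  classical
  have expand : ∏ i, Polynomial.aeval (X i : MvPolynomial σ R) (p i) =
      ∑ k ∈ Fintype.piFinset fun i => Finset.range ((p i).natDegree + 1),
        monomial (Finsupp.equivFunOnFinite.symm k) (∏ i, (p i).coeff (k i)) := by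
    simp only [Polynomial.aeval_eq_sum_range, Finset.prod_univ_sum]
    refine Finset.sum_congr rfl fun k _ => ?_
    simp only [smul_eq_C_mul, Finset.prod_mul_distrib, ← map_prod,
      monomial_eq (s := Finsupp.equivFunOnFinite.symm k), Finsupp.prod_fintype, pow_zero,
      implies_true, Finsupp.equivFunOnFinite_symm_apply_apply]
  simp only [expand, coeff_sum, coeff_monomial, Equiv.symm_apply_eq, Finset.sum_ite_eq']
  refine ite_eq_left_iff.mpr fun hb => ?_
  obtain ⟨i, hi⟩ : ∃ i, (p i).natDegree < b i := by
    simpa [Fintype.mem_piFinset, Order.add_one_le_iff] using hb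
  exact (Finset.prod_eq_zero (Finset.mem_univ i)
    (Polynomial.coeff_eq_zero_of_natDegree_lt hi)).symm

lemma mvHasseDeriv_monomial (b u : σ →₀ ℕ) (r : R) :
    mvHasseDeriv b (monomial u r) = monomial (u - b) (r * ∏ i, ((u i).choose (b i) : R)) := by
  have factor (i : σ) : (C (X i) + X i : MvPolynomial σ (MvPolynomial σ R)) ^ u i =
      Polynomial.aeval (X i) ((Polynomial.X + Polynomial.C (X i : MvPolynomial σ R)) ^ u i) := by
    simp [add_comm, algebraMap_eq]
  rw [mvHasseDeriv_apply, taylorShift, aeval_monomial, Finsupp.prod_fintype _ _ (by simp)]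
  simp only [factor, MvPolynomial.algebraMap_apply, algebraMap_eq, coeff_C_mul, coeff_prod_aeval_X,
    Polynomial.coeff_X_add_C_pow, Finset.prod_mul_distrib]
  rw [monomial_eq, Finsupp.prod_fintype _ _ (by simp)]
  simp only [Finsupp.tsub_apply, map_mul, map_prod, map_natCast]
  ring

lemma coeff_mvHasseDeriv (b c : σ →₀ ℕ) (f : MvPolynomial σ R) :
    coeff c (mvHasseDeriv b f) = coeff (b + c) f * ∏ i, ((b i + c i).choose (b i) : R) := by
  classical
  induction f using MvPolynomial.induction_on' with
  | add p q hp hq => simp only [map_add, coeff_add, hp, hq, add_mul]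
  | monomial u r =>
    rw [mvHasseDeriv_monomial, coeff_monomial, coeff_monomial]
    by_cases hu : u = b + c
    · simp [hu]
    · rw [if_neg hu, zero_mul, ite_eq_right_iff]
      intro huc
      obtain ⟨i, hi⟩ : ∃ i, u i < b i := by
        by_contra! hbu
        exact hu (by rw [← huc, add_tsub_cancel_of_le hbu])
      rw [Finset.prod_eq_zero (Finset.mem_univ i), mul_zero]
      rw [Nat.choose_eq_zero_of_lt hi, Nat.cast_zero]

end HasseDeriv

section LeadingExponent

variable {σ R : Type*} [Finite σ] [CommSemiring R]

lemma coeff_mvHasseDeriv_of_disjoint {b c : σ →₀ ℕ} (hbc : Disjoint b c) (f : MvPolynomial σ R) :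
    coeff c (mvHasseDeriv b f) = coeff (b + c) f := by
  cases nonempty_fintype σ
  have choose_eq_one (i : σ) : (b i + c i).choose (b i) = 1 := by
    by_cases hi : i ∈ b.support
    · have hc := Finset.disjoint_left.mp (Finsupp.disjoint_iff.mp hbc) hi
      simp [Finsupp.notMem_support_iff.mp hc]
    · simp [Finsupp.notMem_support_iff.mp hi]
  simp [coeff_mvHasseDeriv, choose_eq_one]

lemma degree_mvHasseDeriv_of_disjoint (o : MonomialOrder σ) {f : MvPolynomial σ R} (hf : f ≠ 0)
    {b c : σ →₀ ℕ} (hbc : Disjoint b c) (hdeg : o.degree f = b + c) :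
    o.degree (mvHasseDeriv b f) = c := by
  cases nonempty_fintype σ
  refine o.toSyn.injective (le_antisymm ?_ ?_)
  · refine o.degree_le_iff.mpr fun u hu => ?_
    have hbu : b + u ∈ f.support := by
      rw [mem_support_iff] at hu ⊢
      exact left_ne_zero_of_mul (coeff_mvHasseDeriv b u f ▸ hu)
    simpa [hdeg] using o.le_degree hbu
  · refine o.le_degree (mem_support_iff.mpr ?_)
    rw [coeff_mvHasseDeriv_of_disjoint hbc, ← hdeg]
    exact o.coeff_degree_ne_zero_iff.mpr hf

end LeadingExponent

section SubproductSpan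

variable {σ R κ ι : Type*} [CommSemiring R] [Fintype κ]
  (L : ι → κ → MvPolynomial σ R) (e : ι → κ → ℕ)

/-- The span of the subproducts `∏ j, L ℓ j ^ k j`, `k j ≤ e ℓ j`, of the gates of the depth-3
diagonal circuit `∑ ℓ, ∏ j, L ℓ j ^ e ℓ j`; it contains all Hasse derivatives of the circuit. -/
noncomputable def subproductSpan : Submodule R (MvPolynomial σ R) :=
  Submodule.span R (Set.range fun p : Σ ℓ, ∀ j, Fin (e ℓ j + 1) => ∏ j, L p.1 j ^ (p.2 j : ℕ))

instance [Finite ι] : Module.Finite R (subproductSpan L e) :=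
  Module.Finite.span_of_finite R (Set.finite_range _)

lemma finrank_subproductSpan_le [Fintype ι] [StrongRankCondition R] :
    Module.finrank R (subproductSpan L e) ≤ ∑ ℓ, ∏ j, (e ℓ j + 1) := by
  classical
  exact (finrank_range_le_card _).trans_eq (by simp)

end SubproductSpan

section DiagonalCircuit

variable {σ R κ : Type*} [Finite σ] [CommRing R] [Fintype κ]

lemma taylorShift_of_totalDegree_le_one {L : MvPolynomial σ R} (hL : L.totalDegree ≤ 1) :
    taylorShift L = C L + map C (L - C (coeff 0 L)) := by
  classical
  cases nonempty_fintype σ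
  ext b c
  rw [← mvHasseDeriv_apply, coeff_mvHasseDeriv]
  simp only [coeff_add, coeff_C, coeff_map, coeff_sub]
  by_cases hb : b = 0
  · simp [hb]
  by_cases hc : c = 0
  · simp [hc, Ne.symm hb]
  have two_le_degree : 2 ≤ ∑ i ∈ (b + c).support, (b + c) i := by
    have hb' : b.degree ≠ 0 := mt (Finsupp.degree_eq_zero_iff b).mp hb
    have hc' : c.degree ≠ 0 := mt (Finsupp.degree_eq_zero_iff c).mp hc
    rw [← Finsupp.degree_apply, map_add]
    lia
  simp [coeff_eq_zero_of_totalDegree_lt (hL.trans_lt two_le_degree), Ne.symm hb, Ne.symm hc]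

lemma mvHasseDeriv_prod_pow_mem_span {L : κ → MvPolynomial σ R} (hL : ∀ j, (L j).totalDegree ≤ 1)
    (e : κ → ℕ) (b : σ →₀ ℕ) :
    mvHasseDeriv b (∏ j, L j ^ e j) ∈
      Submodule.span R (Set.range fun k : ∀ j, Fin (e j + 1) => ∏ j, L j ^ (k j : ℕ)) := by
  classical
  let P (j : κ) : MvPolynomial σ R := L j - C (coeff 0 (L j))
  simp only [mvHasseDeriv_apply, map_prod, map_pow, taylorShift_of_totalDegree_le_one (hL _),
    add_pow, Finset.prod_univ_sum, coeff_sum]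
  refine Submodule.sum_mem _ fun k hk => ?_
  have separate : ∏ j, C (L j) ^ k j * map C (P j) ^ (e j - k j) *
        ((e j).choose (k j) : MvPolynomial σ (MvPolynomial σ R)) =
      C (∏ j, L j ^ k j) *
        map C (∏ j, P j ^ (e j - k j) * ((e j).choose (k j) : MvPolynomial σ R)) := by
    simp only [map_prod, map_mul, map_pow, map_natCast, ← Finset.prod_mul_distrib, mul_assoc]
  rw [separate, coeff_C_mul, coeff_map, mul_comm, ← smul_eq_C_mul]
  have k_lt (j : κ) : k j < e j + 1 := Finset.mem_range.mp (Fintype.mem_piFinset.mp hk j)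
  exact Submodule.smul_mem _ _ (Submodule.subset_span ⟨fun j => ⟨k j, k_lt j⟩, rfl⟩)

lemma mvHasseDeriv_mem_subproductSpan {ι : Type*} [Fintype ι] {L : ι → κ → MvPolynomial σ R}
    (hL : ∀ ℓ j, (L ℓ j).totalDegree ≤ 1) (e : ι → κ → ℕ) (b : σ →₀ ℕ) :
    mvHasseDeriv b (∑ ℓ, ∏ j, L ℓ j ^ e ℓ j) ∈ subproductSpan L e := by
  rw [map_sum]
  refine Submodule.sum_mem _ fun ℓ _ => ?_
  refine Submodule.span_mono ?_ (mvHasseDeriv_prod_pow_mem_span (hL ℓ) (e ℓ) b)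
  rintro _ ⟨k, rfl⟩
  exact ⟨⟨ℓ, k⟩, rfl⟩

end DiagonalCircuit

section LeadingMonomial

variable {σ R : Type*} [CommRing R] (o : MonomialOrder σ)

lemma linearIndependent_of_injective_degree [NoZeroDivisors R] {ι : Type*}
    {v : ι → MvPolynomial σ R} (hv : ∀ i, v i ≠ 0)
    (hinj : Function.Injective fun i => o.degree (v i)) : LinearIndependent R v := by
  rw [linearIndependent_iff']
  by_contra! ⟨s, g, hsum, i₀, hi₀, hgi₀⟩
  classical
  obtain ⟨i, hi, hmax⟩ := Finset.exists_max_image {i ∈ s | g i ≠ 0}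
    (fun i => o.toSyn (o.degree (v i))) ⟨i₀, by simp [hi₀, hgi₀]⟩
  rw [Finset.mem_filter] at hi
  have others_vanish : ∀ j ∈ s, j ≠ i → coeff (o.degree (v i)) (g j • v j) = 0 := by
    intro j hj hji
    by_cases hgj : g j = 0
    · simp [hgj]
    have hlt : o.toSyn (o.degree (v j)) < o.toSyn (o.degree (v i)) :=
      lt_of_le_of_ne (hmax j (by simp [hj, hgj])) fun h => hji (hinj (o.toSyn.injective h))
    rw [coeff_smul, o.coeff_eq_zero_of_lt hlt, smul_zero]
  have hlead : g i * o.leadingCoeff (v i) = 0 := by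
    have := congrArg (coeff (o.degree (v i))) hsum
    rwa [coeff_sum, Finset.sum_eq_single_of_mem i hi.1 others_vanish] at this
  exact mul_ne_zero hi.2 (o.leadingCoeff_ne_zero_iff.mpr (hv i)) hlead

lemma two_pow_card_support_degree_le_finrank [Finite σ] [IsDomain R] {f : MvPolynomial σ R}
    (hf : f ≠ 0) (W : Submodule R (MvPolynomial σ R)) [Module.Finite R W]
    (hW : ∀ b, mvHasseDeriv b f ∈ W) :
    2 ^ (o.degree f).support.card ≤ Module.finrank R W := by
  classical
  set a := o.degree f
  let inside (T : a.support.powerset) : σ →₀ ℕ := a.filter (· ∈ T.1)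
  let outside (T : a.support.powerset) : σ →₀ ℕ := a.filter (· ∉ T.1)
  have outside_add_inside (T) : a = outside T + inside T := by
    rw [add_comm, Finsupp.filter_add_filter_not]
  have support_inside (T) : (inside T).support = T.1 := by
    rw [Finsupp.support_filter, Finset.filter_mem_eq_inter,
      Finset.inter_eq_right.mpr (Finset.mem_powerset.mp T.2)]
  have outside_disjoint_inside (T) : Disjoint (outside T) (inside T) := by
    rw [Finsupp.disjoint_iff, support_inside, Finset.disjoint_left]
    simp [outside]
  have degree_deriv (T) : o.degree (mvHasseDeriv (outside T) f) = inside T :=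
    degree_mvHasseDeriv_of_disjoint o hf (outside_disjoint_inside T) (outside_add_inside T)
  have deriv_ne_zero (T) : mvHasseDeriv (outside T) f ≠ 0 := by
    refine ne_zero_iff.mpr ⟨inside T, ?_⟩
    rw [coeff_mvHasseDeriv_of_disjoint (outside_disjoint_inside T), ← outside_add_inside]
    exact o.coeff_degree_ne_zero_iff.mpr hf
  have inside_injective : Function.Injective inside := fun T U h =>
    Subtype.ext (by rw [← support_inside T, h, support_inside U])
  have indep : LinearIndependent R fun T => mvHasseDeriv (outside T) f :=
    linearIndependent_of_injective_degree o deriv_ne_zero (by simpa only [degree_deriv])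
  have indep_in_W : LinearIndependent R fun T => (⟨mvHasseDeriv (outside T) f, hW _⟩ : W) :=
    .of_comp W.subtype indep
  simpa only [Fintype.card_coe, Finset.card_powerset] using indep_in_W.fintype_card_le_finrank

end LeadingMonomial

section Evaluation

lemma eval_killCompl {σ τ R : Type*} [CommSemiring R] {φ : σ → τ} (hφ : φ.Injective)
    (x : σ → R) (f : MvPolynomial τ R) :
    eval x (killCompl hφ f) = eval (Function.extend φ x 0) f := by
  induction f using MvPolynomial.induction_on with
  | C r => simp
  | add p q hp hq => simp [hp, hq]
  | mul_X p i hp =>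
    rw [map_mul, map_mul, map_mul, hp, eval_X, killCompl, aeval_X]
    congr 1
    split_ifs with hi
    · obtain ⟨j, rfl⟩ := hi
      simp [hφ.extend_apply]
    · simp [Function.extend_apply' _ _ _ hi]

lemma exists_eval_ne_zero_of_coeff_ne_zero {σ R : Type*} [CommRing R] [IsDomain R]
    {S : σ → Finset R} (hS0 : ∀ i, 0 ∈ S i) {f : MvPolynomial σ R}
    (hdeg : ∀ i, f.degreeOf i < (S i).card) {a : σ →₀ ℕ} (ha : coeff a f ≠ 0) :
    ∃ α : σ → R, (∀ i, α i ∈ S i) ∧ Function.support α ⊆ a.support ∧ eval α f ≠ 0 := by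
  have val_injective : Function.Injective (Subtype.val : a.support → σ) := Subtype.val_injective
  let g : MvPolynomial a.support R := killCompl val_injective f
  have hg : g ≠ 0 := by
    refine ne_zero_iff.mpr ⟨a.comapDomain Subtype.val val_injective.injOn, ?_⟩
    rwa [coeff_killCompl, Finsupp.mapDomain_comapDomain _ val_injective _
      (by rw [Subtype.range_coe])]
  have hgdeg (i : a.support) : g.degreeOf i < (S i).card := by
    refine (degreeOf_lt_iff (Nat.zero_lt_of_lt (hdeg i))).mpr fun u hu => ?_
    rw [mem_support_iff, coeff_killCompl, ← mem_support_iff] at hu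
    rw [← Finsupp.mapDomain_apply val_injective u i]
    exact (monomial_le_degreeOf _ hu).trans_lt (hdeg i)
  obtain ⟨x, hxS, hx⟩ : ∃ x : a.support → R, (∀ i : a.support, x i ∈ S i) ∧ eval x g ≠ 0 := by
    contrapose! hg
    exact eq_zero_of_eval_zero_at_prod_finset g (fun i => S i) hgdeg hg
  have extend_eq_zero {i : σ} (hi : i ∉ a.support) :
      Function.extend (Subtype.val : a.support → σ) x 0 i = 0 :=
    Function.extend_apply' _ _ _ (by simpa using hi)
  refine ⟨Function.extend Subtype.val x 0, fun i => ?_, fun i hi => ?_, ?_⟩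
  · by_cases hi : i ∈ a.support
    · exact val_injective.extend_apply x 0 ⟨i, hi⟩ ▸ hxS ⟨i, hi⟩
    · exact extend_eq_zero hi ▸ hS0 i
  · exact by_contra fun hia => hi (extend_eq_zero hia)
  · rwa [← eval_killCompl val_injective]

end Evaluation

theorem diagonal_circuit_hit_by_small_support_general {σ R ι κ : Type*} [Finite σ] [CommRing R]
    [IsDomain R] [Fintype ι] [Fintype κ] {S : σ → Finset R} (hS0 : ∀ i, 0 ∈ S i)
    {L : ι → κ → MvPolynomial σ R} (hL : ∀ ℓ j, (L ℓ j).totalDegree ≤ 1) (e : ι → κ → ℕ)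
    {f : MvPolynomial σ R} (hf : f = ∑ ℓ, ∏ j, L ℓ j ^ e ℓ j)
    (hdeg : ∀ i, f.degreeOf i < (S i).card) (hnz : f ≠ 0) :
    ∃ α : σ → R, (∀ i, α i ∈ S i) ∧
      2 ^ Set.ncard {i | α i ≠ 0} ≤ ∑ ℓ, ∏ j, (e ℓ j + 1) ∧ eval α f ≠ 0 := by
  obtain ⟨o⟩ : Nonempty (MonomialOrder σ) := by
    let _ : LinearOrder σ := IsWellOrder.linearOrder WellOrderingRel
    exact ⟨.lex⟩
  obtain ⟨α, hαS, hαa, hα⟩ := exists_eval_ne_zero_of_coeff_ne_zero hS0 hdeg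
    (o.coeff_degree_ne_zero_iff.mpr hnz)
  have deriv_mem (b : σ →₀ ℕ) : mvHasseDeriv b f ∈ subproductSpan L e := by
    rw [hf]
    exact mvHasseDeriv_mem_subproductSpan hL e b
  refine ⟨α, hαS, ?_, hα⟩
  calc 2 ^ Set.ncard {i | α i ≠ 0}
      ≤ 2 ^ (o.degree f).support.card := by
        refine Nat.pow_le_pow_right two_pos ?_
        exact (Set.ncard_le_ncard hαa).trans_eq (Set.ncard_coe_finset _)
    _ ≤ Module.finrank R (subproductSpan L e) :=
        two_pow_card_support_degree_le_finrank o hnz _ deriv_mem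
    _ ≤ ∑ ℓ, ∏ j, (e ℓ j + 1) := finrank_subproductSpan_le L e

/-- Let `S ⊆ F` with `0 ∈ S` and `|S| = d+1`.  If
`f = Σ_{ℓ=1}^{s} ∏_{j=1}^{n'} L_{ℓ,j}^{e_{ℓ,j}}` is a nonzero depth-3 diagonal circuit
(each `L_{ℓ,j}` of total degree ≤ 1) of total degree ≤ `d` with
`Σ_ℓ ∏_j (e_{ℓ,j}+1) ≤ 2^m`, then `f` has a nonzero evaluation at some point `α ∈ S^n`
with at most `m` nonzero coordinates. -/
theorem diagonal_circuit_hit_by_small_support {F : Type*} [Field F]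
    (n n' d m s : ℕ) (hd : 1 ≤ d) (hm : 1 ≤ m) (hn : 1 ≤ n) (hs : 1 ≤ s)
    (S : Finset F) (h0 : (0 : F) ∈ S) (hS : S.card = d + 1)
    (L : Fin s → Fin n' → MvPolynomial (Fin n) F)
    (hL : ∀ ℓ j, (L ℓ j).totalDegree ≤ 1)
    (e : Fin s → Fin n' → ℕ)
    (f : MvPolynomial (Fin n) F)
    (hf : f = ∑ ℓ : Fin s, ∏ j : Fin n', L ℓ j ^ e ℓ j)
    (hdeg : f.totalDegree ≤ d)
    (hsize : ∑ ℓ : Fin s, ∏ j : Fin n', (e ℓ j + 1) ≤ 2 ^ m)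
    (hnz : f ≠ 0) :
    ∃ α : Fin n → F, (∀ i, α i ∈ S) ∧ Set.ncard {i : Fin n | α i ≠ 0} ≤ m ∧
      MvPolynomial.eval α f ≠ 0 := by
  obtain ⟨α, hαS, hα, hne⟩ := diagonal_circuit_hit_by_small_support_general (fun _ => h0) hL e hf
    (fun i => hS ▸ Nat.lt_succ_of_le ((degreeOf_le_totalDegree f i).trans hdeg)) hnz
  exact ⟨α, hαS, (Nat.pow_le_pow_iff_right one_lt_two).mp (hα.trans hsize), hne⟩
end

section
/- Let F be a field with |F| > n, and let A = (A_0,…,A_{r−1}) and B = (B_0,…,B_{r−1}) be tuples of r matrices of size n×n over F. Let V := { P ∈ F^{n×n} : B_i P = P A_i for all i ∈ {0,…,r−1} }, an F-linear subspace of the n×n matrices, and let P_1,…,P_ℓ be a basis of V. Then there exists an invertible n×n matrix P over F with B_i = P A_i P^{-1} for all i if and only if the polynomial det(Σ_{j=1}^{ℓ} x_j P_j) ∈ F[x_1,…,x_ℓ] is not the zero polynomial. -/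
/-!
An invertible `P` conjugates `A` to `B` exactly when it is an invertible element of the space of
matrices with `B i * P = P * A i`. If this space is spanned by the `P j`, its elements are the
specializations of the generic element `∑ j, X j • P j`, whose determinant is a homogeneous
polynomial of degree `n`. Over a field with at least `n` elements such a polynomial is nonzero
exactly when it has a nonzero value.
-/

section Intertwiners

variable {R ι m n : Type*} [Fintype m] [Fintype n]

/-- The space of matrices intertwining two tuples of square matrices, called `V` in the
statement; the two tuples may have different sizes. -/
def intertwiners [CommSemiring R] (A : ι → Matrix n n R) (B : ι → Matrix m m R) :
    Submodule R (Matrix m n R) where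
  carrier := {P | ∀ i, B i * P = P * A i}
  zero_mem' i := by rw [Matrix.mul_zero, Matrix.zero_mul]
  add_mem' hP hQ i := by rw [Matrix.mul_add, Matrix.add_mul, hP i, hQ i]
  smul_mem' c P hP i := by rw [Matrix.mul_smul, Matrix.smul_mul, hP i]

theorem mem_intertwiners [CommSemiring R] {A : ι → Matrix n n R} {B : ι → Matrix m m R}
    {P : Matrix m n R} : P ∈ intertwiners A B ↔ ∀ i, B i * P = P * A i :=
  Iff.rfl

theorem exists_conj_iff_exists_mem_intertwiners_isUnit_det [DecidableEq n] [CommRing R]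
    (A B : ι → Matrix n n R) :
    (∃ P : GL n R, ∀ i, B i = (P : Matrix n n R) * A i * ((P⁻¹ : GL n R) : Matrix n n R)) ↔
      ∃ P ∈ intertwiners A B, IsUnit P.det := by
  simp only [Units.eq_mul_inv_iff_mul_eq, ← mem_intertwiners, ← Matrix.isUnit_iff_isUnit_det]
  constructor
  · rintro ⟨P, hP⟩
    exact ⟨P, hP, P.isUnit⟩
  · rintro ⟨_, hP, P, rfl⟩
    exact ⟨P, hP⟩

end Intertwiners

section Polynomial

open MvPolynomial

theorem isHomogeneous_det {R σ n : Type*} [CommRing R] [Fintype n] [DecidableEq n]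
    {M : Matrix n n (MvPolynomial σ R)} {d : n → ℕ} (hM : ∀ i j, (M i j).IsHomogeneous (d j)) :
    M.det.IsHomogeneous (∑ j, d j) := by
  rw [Matrix.det_apply]
  refine IsHomogeneous.sum _ _ _ fun τ _ => ?_
  have hprod : ∏ j, M (τ j) j ∈ homogeneousSubmodule σ R (∑ j, d j) :=
    IsHomogeneous.prod _ _ _ fun j _ => hM (τ j) j
  exact zsmul_mem hprod _

variable {R κ m n : Type*} [Fintype κ]

/-- The linear combination `∑ j, x_j P_j` with indeterminate coefficients, whose specializations
are the elements of the span of the matrices `P_j`. -/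
noncomputable def genericCombination [CommSemiring R] (P : κ → Matrix m n R) :
    Matrix m n (MvPolynomial κ R) :=
  ∑ j, (X j : MvPolynomial κ R) • (P j).map C

theorem genericCombination_apply [CommSemiring R] (P : κ → Matrix m n R) (a : m) (b : n) :
    genericCombination P a b = ∑ j, X j * C (P j a b) := by
  simp [genericCombination, Matrix.sum_apply]

theorem genericCombination_map_eval [CommSemiring R] (P : κ → Matrix m n R) (x : κ → R) :
    (genericCombination P).map (eval x) = ∑ j, x j • P j := by
  ext a b
  simp [genericCombination_apply, Matrix.sum_apply]

theorem isHomogeneous_genericCombination_apply [CommSemiring R] (P : κ → Matrix m n R)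
    (a : m) (b : n) : (genericCombination P a b).IsHomogeneous 1 := by
  rw [genericCombination_apply]
  exact IsHomogeneous.sum _ _ _ fun j _ => (isHomogeneous_X R j).mul (isHomogeneous_C κ _)

variable [Fintype n] [DecidableEq n]

theorem eval_det_genericCombination [CommRing R] (P : κ → Matrix n n R) (x : κ → R) :
    eval x (genericCombination P).det = (∑ j, x j • P j).det := by
  rw [RingHom.map_det, RingHom.mapMatrix_apply, genericCombination_map_eval]

theorem isHomogeneous_det_genericCombination [CommRing R] (P : κ → Matrix n n R) :
    (genericCombination P).det.IsHomogeneous (Fintype.card n) := by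
  simpa using isHomogeneous_det (isHomogeneous_genericCombination_apply P)

theorem det_genericCombination_ne_zero_iff [CommRing R] [IsDomain R]
    (hR : (Fintype.card n : Cardinal) ≤ Cardinal.mk R) (P : κ → Matrix n n R) :
    (genericCombination P).det ≠ 0 ↔
      ∃ M ∈ Submodule.span R (Set.range P), M.det ≠ 0 := by
  simp only [Submodule.mem_span_range_iff_exists_fun, exists_exists_eq_and,
    ← eval_det_genericCombination]
  constructor
  · contrapose!
    intro h
    exact (isHomogeneous_det_genericCombination P).eq_zero_of_forall_eval_eq_zero_of_le_card h hR
  · rintro ⟨x, hx⟩ h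
    exact hx (by rw [h, map_zero])

end Polynomial

theorem orbit_membership_iff_det_ne_zero_general {F ι κ n : Type*} [Field F] [Fintype κ]
    [Fintype n] [DecidableEq n] (hF : (Fintype.card n : Cardinal) ≤ Cardinal.mk F)
    (A B : ι → Matrix n n F) (P : κ → Matrix n n F)
    (hspan : Submodule.span F (Set.range P) = intertwiners A B) :
    (∃ Q : GL n F, ∀ i, B i = (Q : Matrix n n F) * A i * ((Q⁻¹ : GL n F) : Matrix n n F)) ↔
      (genericCombination P).det ≠ 0 := by
  rw [exists_conj_iff_exists_mem_intertwiners_isUnit_det, det_genericCombination_ne_zero_iff hF,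
    hspan]
  simp only [isUnit_iff_ne_zero]

/-- Let `|F| > n` and let `A`, `B` be tuples of `r` matrices of size
`n×n` over `F`.  Let `P_1,…,P_ℓ` be a basis of the solution space
`V = { P : B_i P = P A_i for all i }`.  Then `A` and `B` are simultaneously conjugate
(`B_i = P A_i P⁻¹` for some invertible `P`) iff `det(Σ_j x_j P_j)` is not the zero
polynomial in `F[x_1,…,x_ℓ]`. -/
theorem orbit_membership_iff_det_ne_zero {F : Type*} [Field F]
    (n r ℓ : ℕ) (hF : (n : Cardinal) < Cardinal.mk F)
    (A B : Fin r → Matrix (Fin n) (Fin n) F)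
    (Pb : Fin ℓ → Matrix (Fin n) (Fin n) F)
    (hli : LinearIndependent F Pb)
    (hspan : ∀ P : Matrix (Fin n) (Fin n) F,
      (∀ i, B i * P = P * A i) ↔ P ∈ Submodule.span F (Set.range Pb)) :
    (∃ P : GL (Fin n) F, ∀ i,
        B i = (P : Matrix (Fin n) (Fin n) F) * A i *
          ((P⁻¹ : GL (Fin n) F) : Matrix (Fin n) (Fin n) F)) ↔
      Matrix.det
          (∑ j : Fin ℓ, (MvPolynomial.X j : MvPolynomial (Fin ℓ) F) • (Pb j).map (MvPolynomial.C : F → MvPolynomial (Fin ℓ) F) :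
            Matrix (Fin n) (Fin n) (MvPolynomial (Fin ℓ) F)) ≠ 0 := by
  exact orbit_membership_iff_det_ne_zero_general (by simpa using hF.le) A B Pb
    (Submodule.ext fun P => (hspan P).symm)
end
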